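/- Let ε > 0, a ∈ ℝ, α = a/ε, and λ > 0. Then (ε/(2π)) · Σ_{n∈ℤ} 1/((nε + a)² + λ) = (1/(2√λ)) · sinh(2π√λ/ε) / (cosh(2π√λ/ε) − cos(2πα)). -/

import Mathlib

open MeasureTheory Real Filter

/-- The constant `k(α)` from (K1): `1/|sin(2πα)|` when `α mod 1 ∈ (0,1/4)∪(3/4,1)`,
and `1` when `α mod 1 ∈ [1/4,3/4]`. -/
noncomputable def kConst (α : ℝ) : ℝ :=
  if 1/4 ≤ Int.fract α ∧ Int.fract α ≤ 3/4 then 1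
  else 1 / |Real.sin (2 * Real.pi * α)|

/-- `F(b,α) = b^{5/3} Σ_{k∈ℤ} (|k+α|³+b)^{-2}`. -/
noncomputable def Fsum (α b : ℝ) : ℝ :=
  b ^ ((5:ℝ)/3) * ∑' k : ℤ, ((|(k : ℝ) + α| ^ 3 + b) ^ 2)⁻¹

/-- `sup_{b ≥ 0} F(b,α)`. -/
noncomputable def supF (α : ℝ) : ℝ := ⨆ b : {x : ℝ // 0 ≤ x}, Fsum α b.1

/-- The constant `K₂(α)`. -/
noncomputable def K2 (α : ℝ) : ℝ :=
  5 / (3 * Real.sqrt 3 * Real.pi) * (supF α) ^ 2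

/-- `K(α) = min(K₁(α), K₂(α))` with `K₁(α) = k(α)²`. -/
noncomputable def Kmin (α : ℝ) : ℝ := min ((kConst α) ^ 2) (K2 α)

/-!
Up to the scaling `n * ε + a = ε * (n + α)`, the terms are `((n + α) ^ 2 + s ^ 2)⁻¹` with
`s = √lam / ε`. They factor over `ℂ` as `((w + n) * (z + n))⁻¹` with `w, z = α ∓ s * I`, and by
partial fractions their sum is a difference of the Mittag-Leffler expansions of `π * cot (π * w)`
and `π * cot (π * z)`, which addition formulas turn into `sinh` and `cos`.
-/

section

open Finset SummationFilter

theorem mem_integerComplement_of_im_ne_zero {z : ℂ} (hz : z.im ≠ 0) :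
    z ∈ Complex.integerComplement := by
  rintro ⟨n, rfl⟩
  exact hz (Complex.intCast_im n)

theorem sum_Icc_neg_eq_add_sum_range {M : Type*} [AddCommMonoid M] (f : ℤ → M) (N : ℕ) :
    ∑ n ∈ Icc (-(N : ℤ)) N, f n = f 0 + ∑ n ∈ range N, (f (n + 1) + f (-(n + 1))) := by
  induction N with
  | zero => simp
  | succ N ih =>
    rw [Nat.cast_succ, Icc_succ_succ, sum_union (by simp), sum_pair (by lia), ih, sum_range_succ]
    ac_rfl

theorem hasSum_inv_add_intCast_symmetricIcc {z : ℂ} (hz : z ∈ Complex.integerComplement) :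
    HasSum (fun n : ℤ ↦ (z + n)⁻¹) (π * Complex.cot (π * z)) (symmetricIcc ℤ) := by
  rw [hasSum_symmetricIcc_iff]
  have h := (tendsto_logDeriv_euler_cot_sub hz).const_add (1 / z)
  rw [add_sub_cancel] at h
  refine h.congr fun N ↦ ?_
  simp [sum_Icc_neg_eq_add_sum_range, cotTerm, add_comm, sub_eq_add_neg]

theorem summable_inv_add_intCast_mul_add_intCast (w z : ℂ) :
    Summable fun n : ℤ ↦ ((w + n) * (z + n))⁻¹ := by
  apply EisensteinSeries.summable_inv_of_isBigO_rpow_inv one_lt_two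
  simpa [sq] using (EisensteinSeries.linear_inv_isBigO_right 1 z).mul
    (EisensteinSeries.linear_inv_isBigO_right 1 w)

theorem hasSum_inv_add_intCast_mul_add_intCast {w z : ℂ} (hw : w ∈ Complex.integerComplement)
    (hz : z ∈ Complex.integerComplement) (hwz : w ≠ z) :
    HasSum (fun n : ℤ ↦ ((w + n) * (z + n))⁻¹)
      (π * (Complex.cot (π * w) - Complex.cot (π * z)) / (z - w)) := by
  have partial_fractions (n : ℤ) :
      ((w + n)⁻¹ - (z + n)⁻¹) / (z - w) = ((w + n) * (z + n))⁻¹ := by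
    have w_add_ne_zero := Complex.integerComplement_add_ne_zero hw n
    have z_add_ne_zero := Complex.integerComplement_add_ne_zero hz n
    have z_sub_w_ne_zero := sub_ne_zero.mpr hwz.symm
    field_simp
    ring
  -- Each cotangent series converges only along symmetric partial sums; their difference converges
  -- absolutely, so its unconditional sum is the symmetric one.
  have symmetric_sum := ((hasSum_inv_add_intCast_symmetricIcc hw).sub
    (hasSum_inv_add_intCast_symmetricIcc hz)).div_const (z - w)
  simp only [partial_fractions, ← mul_sub] at symmetric_sum
  have summable := summable_inv_add_intCast_mul_add_intCast w z
  rw [summable.hasSum_iff, ← tsum_eq_of_summable_unconditional (L := symmetricIcc ℤ) summable]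
  exact symmetric_sum.tsum_eq

theorem cot_sub_cot_eq_sin_div_cos_sub_cos {x y : ℂ} (hx : Complex.sin x ≠ 0)
    (hy : Complex.sin y ≠ 0) :
    Complex.cot x - Complex.cot y =
      2 * Complex.sin (y - x) / (Complex.cos (y - x) - Complex.cos (y + x)) := by
  have cos_sub_cos :
      Complex.cos (y - x) - Complex.cos (y + x) = 2 * (Complex.sin x * Complex.sin y) := by
    rw [Complex.cos_sub, Complex.cos_add]
    ring
  rw [cos_sub_cos, mul_div_mul_left _ _ two_ne_zero, Complex.cot, Complex.cot,
    div_sub_div _ _ hx hy, Complex.sin_sub]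
  ring

theorem hasSum_inv_intCast_add_sq_add_sq_complex {x s : ℂ} (hs : s ≠ 0)
    (hsub : x - s * Complex.I ∈ Complex.integerComplement)
    (hadd : x + s * Complex.I ∈ Complex.integerComplement) :
    HasSum (fun n : ℤ ↦ ((n + x) ^ 2 + s ^ 2)⁻¹)
      (π / s * (Complex.sinh (2 * π * s) /
        (Complex.cosh (2 * π * s) - Complex.cos (2 * π * x)))) := by
  set w := x - s * Complex.I with hw
  set z := x + s * Complex.I with hz
  have z_sub_w : z - w = 2 * s * Complex.I := by rw [hw, hz]; ring
  have hwz : w ≠ z := by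
    rw [ne_comm, ← sub_ne_zero, z_sub_w]
    simp [hs]
  have factorization (n : ℤ) : (n + x) ^ 2 + s ^ 2 = (w + n) * (z + n) := by
    rw [hw, hz]
    linear_combination s ^ 2 * Complex.I_sq
  have sub_arg : π * z - π * w = 2 * π * s * Complex.I := by rw [← mul_sub, z_sub_w]; ring
  have add_arg : π * z + π * w = 2 * π * x := by rw [hw, hz]; ring
  simp only [factorization]
  convert hasSum_inv_add_intCast_mul_add_intCast hsub hadd hwz using 1
  rw [cot_sub_cot_eq_sin_div_cos_sub_cos (sin_pi_mul_ne_zero hsub) (sin_pi_mul_ne_zero hadd),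
    z_sub_w, sub_arg, add_arg, Complex.sin_mul_I, Complex.cos_mul_I]
  field_simp

theorem hasSum_inv_intCast_add_sq_add_sq_real (x : ℝ) {s : ℝ} (hs : s ≠ 0) :
    HasSum (fun n : ℤ ↦ ((n + x) ^ 2 + s ^ 2)⁻¹)
      (π / s * (Real.sinh (2 * π * s) / (Real.cosh (2 * π * s) - Real.cos (2 * π * x)))) := by
  have h := hasSum_inv_intCast_add_sq_add_sq_complex (x := x) (Complex.ofReal_ne_zero.mpr hs)
    (mem_integerComplement_of_im_ne_zero (by simpa using hs))
    (mem_integerComplement_of_im_ne_zero (by simpa using hs))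
  exact_mod_cast h

end

/-- diagonal of the Green's function of `(i d/dx - a)² + λ` on the circle. -/
theorem green_function_diagonal
    (ε : ℝ) (hε : 0 < ε) (a α : ℝ) (hα : α = a / ε)
    (lam : ℝ) (hlam : 0 < lam) :
    (ε / (2 * Real.pi)) * ∑' n : ℤ, (((n : ℝ) * ε + a) ^ 2 + lam)⁻¹ =
      (1 / (2 * Real.sqrt lam)) *
        (Real.sinh (2 * Real.pi * Real.sqrt lam / ε) /
          (Real.cosh (2 * Real.pi * Real.sqrt lam / ε) - Real.cos (2 * Real.pi * α))) := by
  have rescale (n : ℤ) : ((n * ε + a) ^ 2 + lam)⁻¹ =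
      (ε ^ 2)⁻¹ * ((n + α) ^ 2 + (√lam / ε) ^ 2)⁻¹ := by
    rw [← mul_inv, hα, div_pow, Real.sq_sqrt hlam.le]
    field_simp
  have hs : √lam / ε ≠ 0 := (div_pos (Real.sqrt_pos.mpr hlam) hε).ne'
  simp only [rescale, tsum_mul_left, (hasSum_inv_intCast_add_sq_add_sq_real α hs).tsum_eq]
  rw [mul_div_assoc (2 * π)]
  field_simp
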